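/- arXiv:1909.03450 — 2 statements merged into one kernel-verified Lean document; each statement's English description precedes it below -/
import Mathlib

section
/- (Dedekind reciprocity law) Let A be a commutative ring, n ≥ 1, and u_1, ..., u_n ∈ A^* such that all partial sums u_1 + ... + u_k (1 ≤ k ≤ n) are units; set u_0 = u_1 + ... + u_n. Then the alternating sum Σ_{i=0}^n (-1)^i {u_0, ..., û_i, ..., u_n} (omitting the i-th entry) lies in the ideal of the Milnor K-ring K^M(A) generated by {-1}. -/
variable (A : Type) [CommRing A]

/-- Generating relations for the Milnor `K`-group of a commutative ring:
multilinearity relations together with the Steinberg relations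
(some two slots summing to `0` or `1`). -/
def steinbergSet (n : ℕ) : Set (FreeAbelianGroup (Fin n → Aˣ)) :=
  {x | ∃ (v : Fin n → Aˣ) (i : Fin n) (a b : Aˣ),
      v i = a * b ∧
      x = FreeAbelianGroup.of v - FreeAbelianGroup.of (Function.update v i a)
            - FreeAbelianGroup.of (Function.update v i b)} ∪
  {x | ∃ v : Fin n → Aˣ,
      (∃ i j : Fin n, i ≠ j ∧ (((v i : A) + (v j : A) = 0) ∨ ((v i : A) + (v j : A) = 1))) ∧
      x = FreeAbelianGroup.of v}

def milnorRel (n : ℕ) : AddSubgroup (FreeAbelianGroup (Fin n → Aˣ)) :=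
  AddSubgroup.closure (steinbergSet A n)

/-- The `n`-th Milnor `K`-group `K_n^M(A)` of a commutative ring `A`. -/
def MilnorK (n : ℕ) : Type :=
  FreeAbelianGroup (Fin n → Aˣ) ⧸ milnorRel A n

instance (n : ℕ) : AddCommGroup (MilnorK A n) :=
  inferInstanceAs (AddCommGroup (FreeAbelianGroup (Fin n → Aˣ) ⧸ milnorRel A n))

/-- The Milnor symbol `{v 0, …, v (n-1)} ∈ K_n^M(A)`. -/
def symbolK (n : ℕ) (v : Fin n → Aˣ) : MilnorK A n :=
  QuotientAddGroup.mk (FreeAbelianGroup.of v)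

/-- The degree-`n` part of the ideal of the Milnor `K`-ring `K^M(A)` generated by `{-1}`:
the subgroup of `K_n^M(A)` generated by symbols having `-1` in some slot. -/
def idealNegOne (n : ℕ) : AddSubgroup (MilnorK A n) :=
  AddSubgroup.closure {x | ∃ v : Fin n → Aˣ, (∃ i : Fin n, v i = -1) ∧ x = symbolK A n v}

/-- Subtracting a fixed vector from every argument of an alternating map. -/
theorem AlternatingMap.map_sub_const {R M N : Type*} [CommRing R] [AddCommGroup M] [Module R M]
    [AddCommGroup N] [Module R N] {n : ℕ} (f : M [⋀^Fin (n + 1)]→ₗ[R] N)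
    (x : Fin (n + 1) → M) (c : M) :
    f (fun i => x i - c) =
      ∑ i : Fin (n + 2), (-1 : ℤ) ^ (i : ℕ) •
        f (fun j => (Fin.cons c x : Fin (n + 2) → M) (i.succAbove j)) := by
  have hadd := f.toMultilinearMap.map_add_eq_map_add_linearDeriv_add x (fun _ => -c)
  have hvanish : ∑ s : Finset (Fin (n + 1)) with 2 ≤ s.card,
      f.toMultilinearMap (s.piecewise (fun _ => -c) x) = 0 := by
    refine Finset.sum_eq_zero fun s hs => ?_
    obtain ⟨i, hi, j, hj, hij⟩ := Finset.one_lt_card.mp (Finset.mem_filter.mp hs).2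
    exact f.map_eq_zero_of_eq _ (by simp [hi, hj]) hij
  have hsub : (fun i => x i - c) = x + fun _ => -c := by
    ext i
    simp [sub_eq_add_neg]
  have hterm (i : Fin (n + 1)) : f (Function.update x i (-c)) =
      (-1 : ℤ) ^ (i.succ : ℕ) •
        f (fun j => (Fin.cons c x : Fin (n + 2) → M) (i.succ.succAbove j)) := by
    have hcons : (fun j => (Fin.cons c x : Fin (n + 2) → M) (i.succ.succAbove j)) =
        Matrix.vecCons c (i.removeNth x) := by
      ext j
      refine Fin.cases ?_ (fun j => ?_) j <;> simp [Fin.removeNth]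
    rw [hcons, f.map_update_neg, ← Fin.insertNth_removeNth, f.map_insertNth, Fin.val_succ,
      pow_succ, mul_neg_one, neg_smul]
  rw [hvanish, add_zero, f.toMultilinearMap.linearDeriv_apply] at hadd
  rw [hsub, Fin.sum_univ_succ]
  refine hadd.trans ?_
  congr 1
  · simp
  · exact Finset.sum_congr rfl fun i _ => hterm i

/-- A multilinear map that vanishes as soon as some argument equals `c` is unchanged
when `c` is subtracted from every argument. -/
theorem MultilinearMap.map_sub_const_of_eq_zero {R M N : Type*} [Ring R] [AddCommGroup M]
    [Module R M] [AddCommGroup N] [Module R N] {ι : Type*} [Fintype ι]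
    (f : MultilinearMap R (fun _ : ι => M) N) (c : M)
    (hf : ∀ v : ι → M, (∃ i, v i = c) → f v = 0) (x : ι → M) :
    f (fun i => x i - c) = f x := by
  classical
  have hadd := f.map_add_univ (fun i => x i - c) (fun _ => c)
  rw [Finset.sum_eq_single Finset.univ, Finset.piecewise_univ] at hadd
  · rw [← hadd]
    congr 1
    ext i
    simp
  · intro s _ hs
    obtain ⟨i, hi⟩ : ∃ i, i ∉ s := by
      by_contra! h
      exact hs (Finset.eq_univ_iff_forall.mpr h)
    exact hf _ ⟨i, by simp [hi]⟩
  · simp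

section

variable {A}

/-- A multilinear map on units satisfying the Steinberg relation vanishes on every tuple of sum `1`
all of whose partial sums are units. -/
theorem steinberg_map_eq_zero {G : Type*} [AddCommGroup G] {n : ℕ}
    (f : MultilinearMap ℤ (fun _ : Fin (n + 1) => Additive Aˣ) G)
    (hf : ∀ v : Fin (n + 1) → Aˣ, (∃ i j, i ≠ j ∧ (v i : A) + v j = 1) →
      f (fun i => Additive.ofMul (v i)) = 0)
    (a : Fin (n + 1) → Aˣ) (hsum : ∑ i, (a i : A) = 1)
    (hpart : ∀ k, IsUnit (∑ i ∈ Finset.Iic k, (a i : A))) :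
    f (fun i => Additive.ofMul (a i)) = 0 := by
  induction n with
  | zero =>
    refine f.map_coord_zero 0 ?_
    rw [ofMul_eq_zero, ← Units.val_inj]
    simpa using hsum
  | succ n ih =>
    have hsumIic (k : Fin (n + 1)) : ∑ i ∈ Finset.Iic k.castSucc, (a i : A) =
        ∑ i ∈ Finset.Iic k, (a i.castSucc : A) := by
      rw [← Fin.map_castSuccEmb_Iic, Finset.sum_map]
      rfl
    have hlast : ∑ i ∈ Finset.Iic (Fin.last n), (a i.castSucc : A) =
        ∑ i : Fin (n + 1), (a i.castSucc : A) :=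
      Finset.sum_congr (by ext i; simp [Fin.le_last]) fun _ _ => rfl
    obtain ⟨s, hs⟩ := hpart (Fin.last n).castSucc
    rw [hsumIic, hlast] at hs
    have hsteinberg : (s : A) + a (Fin.last (n + 1)) = 1 := by
      rw [hs, ← hsum, Fin.sum_univ_castSucc (n := n + 1)]
    let g : MultilinearMap ℤ (fun _ : Fin (n + 1) => Additive Aˣ) G :=
      (LinearMap.applyₗ (Additive.ofMul (a (Fin.last (n + 1))))).compMultilinearMap f.curryRight
    have hg (v : Fin (n + 1) → Aˣ) : g (fun i => Additive.ofMul (v i)) =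
        f (fun i => Additive.ofMul ((Fin.snoc v (a (Fin.last (n + 1))) : Fin (n + 2) → Aˣ) i)) := by
      refine congrArg f (funext fun i => ?_)
      refine Fin.lastCases ?_ (fun i => ?_) i <;> simp
    have hgs : ∀ v : Fin (n + 1) → Additive Aˣ, (∃ i, v i = Additive.ofMul s) → g v = 0 := by
      rintro v ⟨i, hi⟩
      refine (hg fun i => (v i).toMul).trans (hf _ ⟨i.castSucc, Fin.last _, ?_, ?_⟩)
      · exact (Fin.castSucc_lt_last i).ne
      · simpa [hi] using hsteinberg
    have hdiv (i : Fin (n + 1)) : ((a i.castSucc / s : Aˣ) : A) = a i.castSucc * (s⁻¹ : Aˣ) := by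
      rw [div_eq_mul_inv, Units.val_mul]
    have hgdiv : g (fun i => Additive.ofMul (a i.castSucc / s)) = 0 := by
      refine ih g (fun v hv => ?_) (fun i => a i.castSucc / s) ?_ fun k => ?_
      · obtain ⟨i, j, hij, h⟩ := hv
        rw [hg]
        exact hf _ ⟨i.castSucc, j.castSucc, by simpa using hij, by simpa using h⟩
      · simp_rw [hdiv, ← Finset.sum_mul, ← hs, Units.mul_inv]
      · simp_rw [hdiv, ← Finset.sum_mul]
        rw [← hsumIic]
        exact (hpart k.castSucc).mul s⁻¹.isUnit
    have hga : g (fun i => Additive.ofMul (a i.castSucc)) = 0 :=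
      (g.map_sub_const_of_eq_zero _ hgs _).symm.trans hgdiv
    rw [hg] at hga
    rw [← hga]
    refine congrArg f (funext fun i => ?_)
    refine Fin.lastCases ?_ (fun i => ?_) i <;> simp

theorem symbolK_update_mul {n : ℕ} [DecidableEq (Fin n)] (v : Fin n → Aˣ) (i : Fin n) (a b : Aˣ) :
    symbolK A n (Function.update v i (a * b)) =
      symbolK A n (Function.update v i a) + symbolK A n (Function.update v i b) := by
  obtain rfl : ‹DecidableEq (Fin n)› = instDecidableEqFin n := Subsingleton.elim _ _
  have hmem : FreeAbelianGroup.of (Function.update v i (a * b)) -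
      FreeAbelianGroup.of (Function.update v i a) - FreeAbelianGroup.of (Function.update v i b) ∈
        milnorRel A n := by
    refine AddSubgroup.subset_closure (Or.inl ⟨Function.update v i (a * b), i, a, b, by simp, ?_⟩)
    simp only [Function.update_idem]
  rw [← sub_eq_zero, ← sub_sub]
  exact (QuotientAddGroup.eq_zero_iff _).mpr hmem

theorem symbolK_eq_zero {n : ℕ} (v : Fin n → Aˣ) {i j : Fin n} (hij : i ≠ j)
    (h : (v i : A) + v j = 0 ∨ (v i : A) + v j = 1) : symbolK A n v = 0 :=
  (QuotientAddGroup.eq_zero_iff _).mpr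
    (AddSubgroup.subset_closure (Or.inr ⟨v, ⟨i, j, hij, h⟩, rfl⟩))

theorem toMul_update {ι : Type*} [DecidableEq ι] (v : ι → Additive Aˣ) (i : ι) (a : Additive Aˣ) :
    (fun j => (Function.update v i a j).toMul) =
      Function.update (fun j => (v j).toMul) i a.toMul :=
  funext fun j => Function.apply_update (fun _ => Additive.toMul) v i a j

variable (A) in
/-- The Milnor symbol as a multilinear map. -/
def symbolMultilinear (n : ℕ) : MultilinearMap ℤ (fun _ : Fin n => Additive Aˣ) (MilnorK A n) where
  toFun v := symbolK A n fun i => (v i).toMul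
  map_update_add' v i a b := by
    simp only [toMul_update]
    exact symbolK_update_mul _ i a.toMul b.toMul
  map_update_smul' v i m a := by
    simp only [toMul_update]
    exact map_zsmul (AddMonoidHom.mk' (M := Additive Aˣ)
      (fun c => symbolK A n (Function.update (fun j => (v j).toMul) i c.toMul))
      fun a b => symbolK_update_mul _ i a.toMul b.toMul) m a

theorem symbolK_mem_idealNegOne_of_eq {n : ℕ} (v : Fin n → Aˣ) {i j : Fin n} (h : v i = v j)
    (hij : i ≠ j) : symbolK A n v ∈ idealNegOne A n := by
  have hmul := symbolK_update_mul v i (-1) (-v i)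
  have hzero : symbolK A n (Function.update v i (-v i)) = 0 :=
    symbolK_eq_zero _ hij (Or.inl (by simp [hij.symm, h]))
  rw [hzero, add_zero, neg_one_mul, neg_neg, Function.update_eq_self] at hmul
  rw [hmul]
  exact AddSubgroup.subset_closure ⟨_, ⟨i, by simp⟩, rfl⟩

variable (A) in
/-- The Milnor symbol modulo `{-1}` as an alternating map. -/
def symbolAlternating (n : ℕ) :
    (Additive Aˣ) [⋀^Fin n]→ₗ[ℤ] (MilnorK A n ⧸ idealNegOne A n) where
  toMultilinearMap :=
    (QuotientAddGroup.mk' (idealNegOne A n)).toIntLinearMap.compMultilinearMap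
      (symbolMultilinear A n)
  map_eq_zero_of_eq' v _ _ h hij :=
    (QuotientAddGroup.eq_zero_iff _).mpr
      (symbolK_mem_idealNegOne_of_eq (fun i => (v i).toMul) (congrArg Additive.toMul h) hij)

theorem symbolK_div_eq_zero {n : ℕ} (u : Fin (n + 1) → Aˣ) (u0 : Aˣ)
    (h0 : (u0 : A) = ∑ i, (u i : A))
    (hpart : ∀ k, IsUnit (∑ i ∈ Finset.Iic k, (u i : A))) :
    symbolK A (n + 1) (fun i => u i / u0) = 0 := by
  have hdiv (i : Fin (n + 1)) : ((u i / u0 : Aˣ) : A) = u i * (u0⁻¹ : Aˣ) := by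
    rw [div_eq_mul_inv, Units.val_mul]
  refine steinberg_map_eq_zero (symbolMultilinear A (n + 1)) ?_ (fun i => u i / u0) ?_ fun k => ?_
  · rintro v ⟨i, j, hij, h⟩
    exact symbolK_eq_zero v hij (Or.inr h)
  · simp_rw [hdiv, ← Finset.sum_mul, ← h0, Units.mul_inv]
  · simp_rw [hdiv, ← Finset.sum_mul]
    exact (hpart k).mul u0⁻¹.isUnit

end

/-- Dedekind reciprocity law: if `u₁, …, uₙ` are units all of whose partial sums
`u₁ + ⋯ + u_k` are units, and `u₀ = u₁ + ⋯ + uₙ`, then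
`Σ_{i=0}^n (-1)^i {u₀, …, ûᵢ, …, uₙ}` lies in the ideal generated by `{-1}`. -/
theorem dedekind_reciprocity
    (n : ℕ) (hn : 1 ≤ n) (u : Fin n → Aˣ) (u0 : Aˣ)
    (h0 : (u0 : A) = ∑ i, (u i : A))
    (hpart : ∀ k : Fin n, IsUnit (∑ i ∈ Finset.Iic k, (u i : A))) :
    (∑ i : Fin (n + 1), ((-1 : ℤ) ^ (i : ℕ)) •
        symbolK A n (fun j => (Fin.cons u0 u : Fin (n + 1) → Aˣ) (Fin.succAbove i j)))
      ∈ idealNegOne A n := by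
  obtain ⟨n, rfl⟩ := Nat.exists_eq_add_of_le' hn
  have hexpand := (symbolAlternating A (n + 1)).map_sub_const
    (fun i => Additive.ofMul (u i)) (Additive.ofMul u0)
  have hzero : symbolAlternating A (n + 1)
      (fun i => Additive.ofMul (u i) - Additive.ofMul u0) = 0 :=
    congrArg (QuotientAddGroup.mk' (idealNegOne A (n + 1))) (symbolK_div_eq_zero u u0 h0 hpart)
  rw [hzero] at hexpand
  rw [← QuotientAddGroup.ker_mk' (idealNegOne A (n + 1)), AddMonoidHom.mem_ker, map_sum, hexpand]
  refine Finset.sum_congr rfl fun i _ => ?_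
  rw [map_zsmul]
  refine congrArg (fun v => (-1 : ℤ) ^ (i : ℕ) •
    QuotientAddGroup.mk' (idealNegOne A (n + 1)) (symbolK A (n + 1) v)) (funext fun j => ?_)
  cases hk : i.succAbove j using Fin.cases <;> simp [hk]
end

section
/- For V = ℚ^n, f ∈ S(V), and γ ∈ GL_n(ℚ): ∫_V f(x·γ) dh_{ℤ^n}(x) = |det γ| · ∫_V f(x) dh_{ℤ^n}(x). -/
open Complex

/-- `e(z) = exp(2πiz)`. -/
noncomputable def e (z : ℂ) : ℂ := Complex.exp (2 * Real.pi * I * z)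

open Classical in
/-- The (ℂ-valued) characteristic function of the affine lattice `a + dℤⁿ` in `ℚⁿ`. -/
noncomputable def ind (n : ℕ) (a : Fin n → ℚ) (d : ℚ) : (Fin n → ℚ) → ℂ :=
  fun x => if ∃ k : Fin n → ℤ, ∀ i, x i = a i + d * k i then 1 else 0

/-- `S(ℚⁿ)` with complex coefficients: the span of the characteristic functions of
affine lattices `a + dℤⁿ` with `d > 0`. -/
noncomputable def Sc (n : ℕ) : Submodule ℂ ((Fin n → ℚ) → ℂ) :=
  Submodule.span ℂ {f | ∃ (a : Fin n → ℚ) (d : ℚ), 0 < d ∧ f = ind n a d}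

/-- The standard bilinear pairing `⟨x, y⟩ = Σᵢ xᵢ yᵢ` on `ℚⁿ`. -/
def dot (n : ℕ) (x y : Fin n → ℚ) : ℚ := ∑ i, x i * y i

theorem ind_mem_Sc (n : ℕ) (a : Fin n → ℚ) {d : ℚ} (hd : 0 < d) : ind n a d ∈ Sc n :=
  Submodule.subset_span ⟨a, d, hd, rfl⟩

open Classical in
theorem ind_apply (n : ℕ) (a : Fin n → ℚ) (d : ℚ) (x : Fin n → ℚ) :
    ind n a d x = if ∃ k : Fin n → ℤ, x = a + d • (fun i => (k i : ℚ)) then 1 else 0 := by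
  simp [ind, funext_iff]

theorem ind_add_right (n : ℕ) (a t : Fin n → ℚ) (d : ℚ) :
    (fun x => ind n a d (x + t)) = ind n (a - t) d := by
  classical
  funext x
  rw [ind_apply, ind_apply]
  congr 1
  refine propext (exists_congr fun k => ?_)
  rw [← eq_sub_iff_add_eq, sub_add_eq_add_sub]

theorem Matrix.card_quotient_range_vecMulLinear {ι : Type*} [Fintype ι] [DecidableEq ι]
    (A : Matrix ι ι ℤ) (hA : A.det ≠ 0) :
    Nat.card ((ι → ℤ) ⧸ LinearMap.range A.vecMulLinear) = A.det.natAbs := by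
  have hinj : Function.Injective A.vecMulLinear := (injective_iff_map_eq_zero _).2 fun _ hv =>
    Matrix.eq_zero_of_vecMul_eq_zero hA hv
  rw [← Submodule.natAbs_det_equiv _ (LinearEquiv.ofInjective A.vecMulLinear hinj),
    ← Matrix.det_transpose A, ← LinearMap.det_toLin']
  congr 2
  ext x i
  simp

theorem Rat.exists_nat_mul_eq_intCast {ι : Type*} [Finite ι] (c : ι → ℚ) :
    ∃ M : ℕ, 0 < M ∧ ∀ i, ∃ z : ℤ, (M : ℚ) * c i = z := by
  have := Fintype.ofFinite ι
  refine ⟨∏ i, (c i).den, Finset.prod_pos fun i _ => (c i).den_pos, fun i => ?_⟩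
  obtain ⟨m, hm⟩ := Finset.dvd_prod_of_mem (fun i => (c i).den) (Finset.mem_univ i)
  refine ⟨m * (c i).num, ?_⟩
  rw [hm]
  push_cast
  rw [mul_right_comm, Rat.den_mul_eq_num, mul_comm]

/-- The preimage of `a + dℤⁿ` under `x ↦ x·γ` is a disjoint union of cosets of `dMℤⁿ`, one for
each class modulo the row lattice of the integral matrix `A = M γ`. -/
theorem ind_comp_vecMul_eq_sum (n : ℕ) (γ : GL (Fin n) ℚ) (M : ℕ) (A : Matrix (Fin n) (Fin n) ℤ)
    (hA : (M : ℚ) • (γ : Matrix (Fin n) (Fin n) ℚ) = A.map (Int.castRingHom ℚ))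
    (a : Fin n → ℚ) {d : ℚ} (hd : 0 < d)
    [Fintype ((Fin n → ℤ) ⧸ LinearMap.range A.vecMulLinear)] :
    (fun x => ind n a d (Matrix.vecMul x (γ : Matrix (Fin n) (Fin n) ℚ))) =
      ∑ q : (Fin n → ℤ) ⧸ LinearMap.range A.vecMulLinear,
        ind n (Matrix.vecMul (a + d • (fun i => (q.out i : ℚ)))
          ((γ⁻¹ : GL (Fin n) ℚ) : Matrix (Fin n) (Fin n) ℚ)) (d * M) := by
  classical
  have hmul (k : Fin n → ℤ) : Matrix.vecMul ((M : ℚ) • fun i => (k i : ℚ))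
      (γ : Matrix (Fin n) (Fin n) ℚ) = fun i => ((Matrix.vecMul k A i : ℤ) : ℚ) := by
    rw [Matrix.smul_vecMul, ← Matrix.vecMul_smul, hA]
    funext i
    exact (RingHom.map_vecMul (Int.castRingHom ℚ) A k i).symm
  have hcancel : ((γ⁻¹ : GL (Fin n) ℚ) : Matrix (Fin n) (Fin n) ℚ) *
      (γ : Matrix (Fin n) (Fin n) ℚ) = 1 := by simp
  have hinj : Function.Injective
      (fun x => Matrix.vecMul x (γ : Matrix (Fin n) (Fin n) ℚ)) :=
    Matrix.vecMul_injective_of_isUnit γ.isUnit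
  have hcoset (x : Fin n → ℚ) (l : Fin n → ℤ) :
      (∃ k : Fin n → ℤ, x = Matrix.vecMul (a + d • (fun i => (l i : ℚ)))
        ((γ⁻¹ : GL (Fin n) ℚ) : Matrix (Fin n) (Fin n) ℚ) + (d * M) • (fun i => (k i : ℚ))) ↔
      ∃ k : Fin n → ℤ, Matrix.vecMul x (γ : Matrix (Fin n) (Fin n) ℚ) =
        a + d • (fun i => ((l + Matrix.vecMul k A : Fin n → ℤ) i : ℚ)) := by
    refine exists_congr fun k => ?_
    rw [← hinj.eq_iff]
    rw [Matrix.add_vecMul, Matrix.vecMul_vecMul, hcancel, Matrix.vecMul_one, mul_smul,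
      Matrix.smul_vecMul, hmul, add_assoc, ← smul_add]
    simp only [Pi.add_apply, Int.cast_add]
    rfl
  funext x
  rw [Finset.sum_apply]
  simp only [ind_apply, hcoset]
  split_ifs with hx
  · obtain ⟨k, hk⟩ := hx
    rw [Finset.sum_eq_single (Submodule.Quotient.mk k), if_pos]
    · have : (Submodule.Quotient.mk (p := LinearMap.range A.vecMulLinear)
          (Submodule.Quotient.mk k : (Fin n → ℤ) ⧸ LinearMap.range A.vecMulLinear).out) =
          Submodule.Quotient.mk k := Quotient.out_eq _
      obtain ⟨l, hl⟩ := (Submodule.Quotient.eq _).1 this.symm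
      refine ⟨l, ?_⟩
      rw [Matrix.vecMulLinear_apply] at hl
      rw [hk, hl, add_sub_cancel]
    · rintro q - hq
      refine if_neg ?_
      rintro ⟨l, hl⟩
      apply hq
      have hkl : k = q.out + Matrix.vecMul l A := by
        have := smul_right_injective _ hd.ne' (add_left_cancel (hk.symm.trans hl))
        funext i
        exact_mod_cast congrFun this i
      have hmem : k - q.out ∈ LinearMap.range A.vecMulLinear :=
        ⟨l, by rw [Matrix.vecMulLinear_apply, eq_sub_iff_add_eq, add_comm]; exact hkl.symm⟩
      exact (Quotient.out_eq q).symm.trans ((Submodule.Quotient.eq _).2 hmem).symm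
    · simp
  · refine (Finset.sum_eq_zero fun q _ => if_neg ?_).symm
    rintro ⟨l, hl⟩
    exact hx ⟨_, hl⟩

theorem haar_ind_comp_vecMul (n : ℕ) (h : Sc n →ₗ[ℂ] ℂ)
    (hinv : ∀ (t : Fin n → ℚ) (f : (Fin n → ℚ) → ℂ) (hf : f ∈ Sc n)
      (hf' : (fun x => f (x + t)) ∈ Sc n),
      h ⟨fun x => f (x + t), hf'⟩ = h ⟨f, hf⟩)
    (γ : GL (Fin n) ℚ) {M : ℕ} (hM : 0 < M) (A : Matrix (Fin n) (Fin n) ℤ)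
    (hA : (M : ℚ) • (γ : Matrix (Fin n) (Fin n) ℚ) = A.map (Int.castRingHom ℚ))
    (a : Fin n → ℚ) {d : ℚ} (hd : 0 < d) (hdM : 0 < d * M) :
    ∃ hm : (fun x => ind n a d (Matrix.vecMul x (γ : Matrix (Fin n) (Fin n) ℚ))) ∈ Sc n,
      h ⟨_, hm⟩ = ((M ^ n * |(γ : Matrix (Fin n) (Fin n) ℚ).det| : ℚ) : ℂ) *
        h ⟨ind n 0 (d * M), ind_mem_Sc n 0 hdM⟩ := by
  have htrans (b : Fin n → ℚ) : h ⟨ind n b (d * M), ind_mem_Sc n b hdM⟩ =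
      h ⟨ind n 0 (d * M), ind_mem_Sc n 0 hdM⟩ := by
    have hb : (fun x => ind n b (d * M) (x + b)) = ind n 0 (d * M) := by
      rw [ind_add_right, sub_self]
    rw [← hinv b _ (ind_mem_Sc n b hdM) (hb ▸ ind_mem_Sc n 0 hdM)]
    congr 2
  have hdet : (M : ℚ) ^ n * (γ : Matrix (Fin n) (Fin n) ℚ).det = (A.det : ℚ) := by
    have := congrArg Matrix.det hA
    rwa [Matrix.det_smul, Fintype.card_fin, ← RingHom.mapMatrix_apply, ← RingHom.map_det] at this
  have hA0 : A.det ≠ 0 := by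
    have hγ : (γ : Matrix (Fin n) (Fin n) ℚ).det ≠ 0 :=
      ((Matrix.isUnit_iff_isUnit_det _).1 γ.isUnit).ne_zero
    rw [← Int.cast_ne_zero (α := ℚ), ← hdet]
    positivity
  have hcard := Matrix.card_quotient_range_vecMulLinear A hA0
  have : Finite ((Fin n → ℤ) ⧸ LinearMap.range A.vecMulLinear) :=
    Nat.finite_of_card_ne_zero (by rw [hcard]; exact Int.natAbs_ne_zero.2 hA0)
  have := Fintype.ofFinite ((Fin n → ℤ) ⧸ LinearMap.range A.vecMulLinear)
  rw [ind_comp_vecMul_eq_sum n γ M A hA a hd]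
  refine ⟨Submodule.sum_mem _ fun q _ => ind_mem_Sc n _ hdM, ?_⟩
  have hsum : (⟨_, Submodule.sum_mem _ fun q _ => ind_mem_Sc n _ hdM⟩ : Sc n) =
      ∑ q : (Fin n → ℤ) ⧸ LinearMap.range A.vecMulLinear,
        (⟨ind n (Matrix.vecMul (a + d • (fun i => (q.out i : ℚ)))
          ((γ⁻¹ : GL (Fin n) ℚ) : Matrix (Fin n) (Fin n) ℚ)) (d * M), ind_mem_Sc n _ hdM⟩ : Sc n) :=
    Subtype.ext (by rw [AddSubmonoidClass.coe_finsetSum])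
  have habs : (M : ℚ) ^ n * |(γ : Matrix (Fin n) (Fin n) ℚ).det| = (A.det.natAbs : ℚ) := by
    rw [Nat.cast_natAbs, Int.cast_abs, ← hdet, abs_mul,
      abs_of_nonneg (by positivity : (0 : ℚ) ≤ (M : ℚ) ^ n)]
  rw [hsum, map_sum, Finset.sum_congr rfl fun q _ => htrans _, Finset.sum_const,
    Finset.card_univ, ← Nat.card_eq_fintype_card, hcard, nsmul_eq_mul, habs, Rat.cast_natCast]

open Matrix in
/-- Change of variables for the Haar distribution `h_{ℤⁿ}` on `S(ℚⁿ)` (the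
translation-invariant distribution normalized by `h(χ_{ℤⁿ}) = 1`): for `f ∈ S(ℚⁿ)` and
`γ ∈ GLₙ(ℚ)`, `∫ f(x·γ) dh(x) = |det γ| · ∫ f(x) dh(x)`. -/
theorem haar_change_of_variables
    (n : ℕ) (h : Sc n →ₗ[ℂ] ℂ)
    (hnorm : ∀ hm : ind n 0 1 ∈ Sc n, h ⟨ind n 0 1, hm⟩ = 1)
    (hinv : ∀ (t : Fin n → ℚ) (f : (Fin n → ℚ) → ℂ) (hf : f ∈ Sc n)
      (hf' : (fun x => f (x + t)) ∈ Sc n),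
      h ⟨fun x => f (x + t), hf'⟩ = h ⟨f, hf⟩)
    (γ : GL (Fin n) ℚ) (f : (Fin n → ℚ) → ℂ) (hf : f ∈ Sc n)
    (hf2 : (fun x => f (Matrix.vecMul x (γ : Matrix (Fin n) (Fin n) ℚ))) ∈ Sc n) :
    h ⟨fun x => f (Matrix.vecMul x (γ : Matrix (Fin n) (Fin n) ℚ)), hf2⟩
      = ((|(γ : Matrix (Fin n) (Fin n) ℚ).det| : ℚ) : ℂ) * h ⟨f, hf⟩ := by
  have key : ∃ hm : (fun x => f (Matrix.vecMul x (γ : Matrix (Fin n) (Fin n) ℚ))) ∈ Sc n,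
      h ⟨_, hm⟩ = ((|(γ : Matrix (Fin n) (Fin n) ℚ).det| : ℚ) : ℂ) * h ⟨f, hf⟩ := by
    clear hf2
    unfold Sc at hf
    induction hf using Submodule.span_induction with
    | mem f hf =>
      obtain ⟨a, d, hd, rfl⟩ := hf
      obtain ⟨M, hM, hMγ⟩ := Rat.exists_nat_mul_eq_intCast
        fun p : Fin n × Fin n => (γ : Matrix (Fin n) (Fin n) ℚ) p.1 p.2
      choose A hA using hMγ
      have hdM : 0 < d * M := by positivity
      obtain ⟨hm, hγ⟩ := haar_ind_comp_vecMul n h hinv γ hM (Matrix.of fun i j => A (i, j))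
        (by ext i j; simpa using hA (i, j)) a hd hdM
      obtain ⟨hm₁, h₁⟩ := haar_ind_comp_vecMul n h hinv 1 hM (Matrix.diagonal fun _ => (M : ℤ))
        (by ext i j; by_cases hij : i = j <;> simp [hij]) a hd hdM
      refine ⟨hm, ?_⟩
      have hone : h ⟨_, hm₁⟩ = h ⟨ind n a d, ind_mem_Sc n a hd⟩ := by
        congr 2
        funext x
        simp
      rw [hγ, ← hone, h₁]
      simp
      ring
    | zero => exact ⟨(Sc n).zero_mem, by
        rw [show h ⟨0, _⟩ = 0 from h.map_zero, mul_zero]; exact h.map_zero⟩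
    | add f g hf hg ihf ihg =>
      obtain ⟨hf', ihf⟩ := ihf
      obtain ⟨hg', ihg⟩ := ihg
      refine ⟨(Sc n).add_mem hf' hg', ?_⟩
      rw [show h ⟨f + g, _⟩ = h ⟨f, hf⟩ + h ⟨g, hg⟩ from h.map_add ⟨f, hf⟩ ⟨g, hg⟩, mul_add,
        ← ihf, ← ihg]
      exact h.map_add ⟨_, hf'⟩ ⟨_, hg'⟩
    | smul c f hf ihf =>
      obtain ⟨hf', ihf⟩ := ihf
      refine ⟨(Sc n).smul_mem c hf', ?_⟩
      rw [show h ⟨c • f, _⟩ = c • h ⟨f, hf⟩ from h.map_smul c ⟨f, hf⟩, mul_smul_comm, ← ihf]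
      exact h.map_smul c ⟨_, hf'⟩
  exact key.choose_spec
end
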